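/- There is a first-order formula φ_BitR(x,z) over the language with binary relation symbols for < and ◁ and unary relation symbols for C and Q such that for every n ∈ ℕ and all a,b ∈ {0,...,n}, the finite prefix structure ({0,...,n}, <, ◁, C, Q) satisfies φ_BitR(a,b) iff bit r(b) of the binary representation of a is 1. -/

import Mathlib

open FirstOrder Language

/-- `q_i = i(i+1)/2`, the smallest element of column `i`. -/
def qseq (i : ℕ) : ℕ := i * (i + 1) / 2

/-- `c(x)`, the column number of `x`: the largest `i` with `q_i ≤ x`. -/
def col (x : ℕ) : ℕ := Nat.findGreatest (fun i => qseq i ≤ x) x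

/-- `q(x) = q_{c(x)}`, the bottom-most element of the column of `x`. -/
def qf (x : ℕ) : ℕ := qseq (col x)

/-- `r(x) = x - q(x)`, the row number of `x`. -/
def rowf (x : ℕ) : ℕ := x - qf x

/-- The row-major linear order `◁`. -/
def ordc (x y : ℕ) : Prop := rowf x < rowf y ∨ (rowf x = rowf y ∧ col x < col y)

/-- The unary predicate `C`: bit `r(x)` of `c(x)+1` is 1. -/
def Cpred (x : ℕ) : Prop := Nat.testBit (col x + 1) (rowf x) = true

/-- The unary predicate `Q`: bit `r(x)` of `q_{c(x)+1}` is 1. -/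
def Qpred (x : ℕ) : Prop := Nat.testBit (qseq (col x + 1)) (rowf x) = true

/-- Relation symbols of the language with binary `<`, `◁` and unary `C`, `Q`. -/
inductive Rel4 : ℕ → Type
  | lt : Rel4 2
  | ordc : Rel4 2
  | C : Rel4 1
  | Q : Rel4 1

/-- The language with binary relation symbols for `<` and `◁` and unary `C`, `Q`. -/
def L4 : Language := ⟨fun _ => Empty, Rel4⟩

/-- The finite prefix structure `({0,...,n}, <, ◁, C, Q)`. -/
def struct4 (n : ℕ) : L4.Structure (Fin (n + 1)) where
  funMap := fun f _ => f.elim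
  RelMap := fun r v =>
    match r with
    | .lt => (v 0 : ℕ) < (v 1 : ℕ)
    | .ordc => ordc (v 0 : ℕ) (v 1 : ℕ)
    | .C => Cpred (v 0 : ℕ)
    | .Q => Qpred (v 0 : ℕ)

/-! ### Coordinates -/

theorem qseq_succ (i : ℕ) : qseq (i + 1) = qseq i + (i + 1) := by
  unfold qseq
  have : (i + 1) * (i + 1 + 1) = i * (i + 1) + (i + 1) * 2 := by ring
  rw [this, Nat.add_mul_div_right _ _ (by norm_num)]

theorem qseq_mono : StrictMono qseq :=
  strictMono_nat_of_lt_succ (fun i => by rw [qseq_succ]; omega)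

theorem qseq_zero : qseq 0 = 0 := rfl

theorem qseq_col_le (x : ℕ) : qseq (col x) ≤ x := by
  unfold col
  exact Nat.findGreatest_spec (P := fun i => qseq i ≤ x) (Nat.zero_le x)
    (by rw [qseq_zero]; exact Nat.zero_le x)

theorem lt_qseq_col (x : ℕ) : x < qseq (col x + 1) := by
  by_contra h
  push Not at h
  have h1 : col x + 1 ≤ x := (qseq_mono.le_apply).trans h
  have := Nat.le_findGreatest (P := fun i => qseq i ≤ x) h1 h
  unfold col at this
  omega

theorem rowf_le_col (x : ℕ) : rowf x ≤ col x := by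
  have := lt_qseq_col x
  rw [qseq_succ] at this
  unfold rowf qf
  omega

theorem eq_coord (x : ℕ) : x = qseq (col x) + rowf x := by
  have := qseq_col_le x
  unfold rowf qf
  omega

theorem col_pt {c r : ℕ} (h : r ≤ c) : col (qseq c + r) = c := by
  have h1 := qseq_col_le (qseq c + r)
  have h2 := lt_qseq_col (qseq c + r)
  have h3 : qseq (col (qseq c + r)) < qseq (c + 1) := by rw [qseq_succ]; omega
  have h4 : qseq c < qseq (col (qseq c + r) + 1) := by omega
  rw [qseq_mono.lt_iff_lt] at h3 h4
  omega

theorem row_pt {c r : ℕ} (h : r ≤ c) : rowf (qseq c + r) = r := by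
  unfold rowf qf
  rw [col_pt h]
  omega

theorem lt_coord (x y : ℕ) :
    x < y ↔ col x < col y ∨ (col x = col y ∧ rowf x < rowf y) := by
  have hx := eq_coord x
  have hy := eq_coord y
  have rx := rowf_le_col x
  have ry := rowf_le_col y
  rcases lt_trichotomy (col x) (col y) with h | h | h
  · have := qseq_mono.monotone (show col x + 1 ≤ col y from h)
    rw [qseq_succ] at this
    omega
  · rw [h] at hx
    omega
  · have := qseq_mono.monotone (show col y + 1 ≤ col x from h)
    rw [qseq_succ] at this
    omega

/-- Existence of points with given coordinates. -/
theorem exists_pt {n c r : ℕ} (y : Fin (n + 1)) (h : r ≤ c)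
    (hy : c < col y ∨ (c = col y ∧ r ≤ rowf y)) :
    ∃ z : Fin (n + 1), col z = c ∧ rowf z = r := by
  have h1 := col_pt h
  have h2 := row_pt h
  have h3 : ¬ ((y : ℕ) < qseq c + r) := by
    rw [lt_coord, h1, h2]; omega
  exact ⟨⟨qseq c + r, by have := y.2; omega⟩, h1, h2⟩

/-! ### Definability -/

/-- Uniform definability over all finite prefix structures. -/
def Dfn {α : Type} (P : ∀ n : ℕ, (α → Fin (n + 1)) → Prop) : Prop :=
  ∃ φ : L4.Formula α, ∀ n : ℕ, ∀ v : α → Fin (n + 1),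
    (@Formula.Realize L4 _ (struct4 n) α φ v ↔ P n v)

theorem Dfn.congr {α : Type} {P Q : ∀ n : ℕ, (α → Fin (n + 1)) → Prop} (h : Dfn P)
    (e : ∀ n v, P n v ↔ Q n v) : Dfn Q := by
  obtain ⟨φ, h⟩ := h
  exact ⟨φ, fun n v => (h n v).trans (e n v)⟩

theorem Dfn.not {α : Type} {P : ∀ n : ℕ, (α → Fin (n + 1)) → Prop} (h : Dfn P) :
    Dfn (fun n v => ¬ P n v) := by
  obtain ⟨φ, h⟩ := h
  refine ⟨∼φ, fun n v => ?_⟩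
  let _ := struct4 n
  beta_reduce
  rw [← h n v]
  exact Formula.realize_not

theorem Dfn.and {α : Type} {P Q : ∀ n : ℕ, (α → Fin (n + 1)) → Prop} (h : Dfn P)
    (h' : Dfn Q) : Dfn (fun n v => P n v ∧ Q n v) := by
  obtain ⟨φ, h⟩ := h
  obtain ⟨ψ, h'⟩ := h'
  refine ⟨φ ⊓ ψ, fun n v => ?_⟩
  let _ := struct4 n
  beta_reduce
  rw [← h n v, ← h' n v]
  exact Formula.realize_inf

theorem Dfn.or {α : Type} {P Q : ∀ n : ℕ, (α → Fin (n + 1)) → Prop} (h : Dfn P)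
    (h' : Dfn Q) : Dfn (fun n v => P n v ∨ Q n v) :=
  (h.not.and h'.not).not.congr (fun n v => by tauto)

theorem Dfn.imp {α : Type} {P Q : ∀ n : ℕ, (α → Fin (n + 1)) → Prop} (h : Dfn P)
    (h' : Dfn Q) : Dfn (fun n v => P n v → Q n v) :=
  (h.and h'.not).not.congr (fun n v => by tauto)

theorem Dfn.subst {α β : Type} {P : ∀ n : ℕ, (α → Fin (n + 1)) → Prop} (h : Dfn P)
    (f : α → β) : Dfn (fun n (v : β → Fin (n + 1)) => P n (fun a => v (f a))) := by
  obtain ⟨φ, h⟩ := h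
  refine ⟨φ.relabel f, fun n v => ?_⟩
  let _ := struct4 n
  beta_reduce
  rw [← h n]
  exact Formula.realize_relabel

theorem Dfn.ex {α : Type} {P : ∀ n : ℕ, (α → Fin (n + 1)) → Fin (n + 1) → Prop}
    (h : Dfn (α := Option α) (fun n v => P n (fun a => v (some a)) (v none))) :
    Dfn (fun n v => ∃ x, P n v x) := by
  obtain ⟨φ, h⟩ := h
  refine ⟨Formula.iExs Unit
    (φ.relabel (fun o : Option α => (o.elim (Sum.inr ()) Sum.inl : α ⊕ Unit))), fun n v => ?_⟩
  let _ := struct4 n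
  rw [Formula.realize_iExs]
  constructor
  · rintro ⟨i, hi⟩
    rw [Formula.realize_relabel, h n] at hi
    exact ⟨i (), hi⟩
  · rintro ⟨x, hx⟩
    refine ⟨fun _ => x, ?_⟩
    rw [Formula.realize_relabel, h n]
    exact hx

theorem Dfn.all {α : Type} {P : ∀ n : ℕ, (α → Fin (n + 1)) → Fin (n + 1) → Prop}
    (h : Dfn (α := Option α) (fun n v => P n (fun a => v (some a)) (v none))) :
    Dfn (fun n v => ∀ x, P n v x) :=
  (Dfn.ex (P := fun n v x => ¬ P n v x) h.not).not.congr (fun n v => by simp)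

/-- A binary relation on `ℕ` definable in arbitrary variables. -/
def Dfn2 (R : ℕ → ℕ → Prop) : Prop :=
  ∀ {α : Type} (i j : α), Dfn (fun n v => R (v i : Fin (n + 1)) (v j : Fin (n + 1)))

/-- A unary relation on `ℕ` definable in arbitrary variables. -/
def Dfn1 (R : ℕ → Prop) : Prop :=
  ∀ {α : Type} (i : α), Dfn (fun n v => R (v i : Fin (n + 1)))

theorem d_lt : Dfn2 (fun x y => x < y) := fun i j =>
  ⟨Relations.formula (L := L4) (n := 2) Rel4.lt ![Term.var i, Term.var j], fun n v => by
    let _ := struct4 n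
    exact Formula.realize_rel.trans Iff.rfl⟩

theorem d_ordc : Dfn2 ordc := fun i j =>
  ⟨Relations.formula (L := L4) (n := 2) Rel4.ordc ![Term.var i, Term.var j], fun n v => by
    let _ := struct4 n
    exact Formula.realize_rel.trans Iff.rfl⟩

theorem d_C : Dfn1 Cpred := fun i =>
  ⟨Relations.formula (L := L4) (n := 1) Rel4.C ![Term.var i], fun n v => by
    let _ := struct4 n
    exact Formula.realize_rel.trans Iff.rfl⟩

theorem d_Q : Dfn1 Qpred := fun i =>
  ⟨Relations.formula (L := L4) (n := 1) Rel4.Q ![Term.var i], fun n v => by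
    let _ := struct4 n
    exact Formula.realize_rel.trans Iff.rfl⟩

theorem d_row0 : Dfn1 (fun x => rowf x = 0) := fun {α} i => by
  refine Dfn.congr (Dfn.all (P := fun n v (p : Fin (n + 1)) => (p : ℕ) < (v i : ℕ) →
    ((∃ w : Fin (n + 1), (p : ℕ) < (w : ℕ) ∧ (w : ℕ) < (v i : ℕ)) ∨ ordc (v i) p ∨
      ¬ ∃ w : Fin (n + 1), (w : ℕ) < (p : ℕ)))
    (.imp (d_lt _ _) (.or (.ex (.and (d_lt _ _) (d_lt _ _)))
      (.or (d_ordc _ _) (.not (.ex (d_lt _ _))))))) ?_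
  intro n v
  beta_reduce
  generalize v i = x
  constructor
  · intro h
    by_contra hx
    have hrc := rowf_le_col x
    obtain ⟨p, hp1, hp2⟩ := exists_pt (c := col x) (r := rowf x - 1) x (by omega) (by omega)
    rcases h p ((lt_coord _ _).2 (by omega)) with ⟨w, h1, h2⟩ | h | h
    · rw [lt_coord] at h1 h2
      omega
    · unfold ordc at h
      omega
    · obtain ⟨w, hw1, hw2⟩ := exists_pt (c := 0) (r := 0) x (by omega) (by omega)
      exact h ⟨w, (lt_coord _ _).2 (by omega)⟩
  · intro hx p hp
    rw [lt_coord] at hp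
    by_cases h0 : col p = 0
    · right; right
      rintro ⟨w, hw⟩
      rw [lt_coord] at hw
      have := rowf_le_col p
      omega
    · by_cases h1 : rowf p = 0
      · left
        obtain ⟨w, hw1, hw2⟩ := exists_pt (c := col p) (r := 1) x (by omega) (by omega)
        exact ⟨w, (lt_coord _ _).2 (by omega), (lt_coord _ _).2 (by omega)⟩
      · right; left
        unfold ordc
        omega

theorem d_colLt : Dfn2 (fun x y => col x < col y) := fun {α} i j => by
  refine Dfn.congr (Dfn.ex (P := fun n v (w : Fin (n + 1)) => rowf w = 0 ∧ (v i : ℕ) < (w : ℕ) ∧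
    ¬ (v j : ℕ) < (w : ℕ))
    (.and (d_row0 _) (.and (d_lt _ _) (.not (d_lt _ _))))) ?_
  intro n v
  beta_reduce
  generalize v i = x
  generalize v j = y
  constructor
  · rintro ⟨w, h0, h1, h2⟩
    rw [lt_coord] at h1 h2
    omega
  · intro h
    obtain ⟨w, hw1, hw2⟩ := exists_pt (c := col y) (r := 0) y (by omega) (by omega)
    exact ⟨w, hw2, (lt_coord _ _).2 (by omega), by rw [lt_coord]; omega⟩

theorem d_colEq : Dfn2 (fun x y => col x = col y) := fun {α} i j =>
  Dfn.congr (.and (.not (d_colLt i j)) (.not (d_colLt j i))) (fun n v => by omega)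

theorem d_rowEqLt : Dfn2 (fun x y => col x < col y ∧ rowf x = rowf y) := fun {α} i j => by
  refine Dfn.congr (.and (d_colLt i j) (.and (d_ordc i j)
    (Dfn.all (P := fun n v (w : Fin (n + 1)) => (w : ℕ) < (v j : ℕ) → col w = col (v j) →
      ¬ ordc (v i) w)
    (.imp (d_lt _ _) (.imp (d_colEq _ _) (.not (d_ordc _ _))))))) ?_
  intro n v
  beta_reduce
  generalize v i = x
  generalize v j = y
  have := rowf_le_col y
  constructor
  · rintro ⟨h0, h1, h2⟩
    refine ⟨h0, ?_⟩
    unfold ordc at h1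
    by_contra hne
    obtain ⟨w, hw1, hw2⟩ := exists_pt (c := col y) (r := rowf y - 1) y (by omega) (by omega)
    refine h2 w ((lt_coord _ _).2 (by omega)) hw1 ?_
    unfold ordc
    omega
  · rintro ⟨h0, h1⟩
    refine ⟨h0, by unfold ordc; omega, ?_⟩
    intro w hw1 hw2
    rw [lt_coord] at hw1
    unfold ordc
    omega

theorem d_rowEq : Dfn2 (fun x y => rowf x = rowf y) := fun {α} i j => by
  refine Dfn.congr (.or (d_rowEqLt i j) (.or (d_rowEqLt j i)
    (.and (d_colEq i j) (.and (.not (d_lt i j)) (.not (d_lt j i)))))) ?_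
  intro n v
  beta_reduce
  rw [lt_coord (v i) (v j), lt_coord (v j) (v i)]
  omega

theorem d_colSucc : Dfn2 (fun x y => col x + 1 = col y) := fun {α} i j => by
  refine Dfn.congr (.and (d_colLt i j) (.not
    (Dfn.ex (P := fun n v (w : Fin (n + 1)) => col (v i) < col w ∧ col w < col (v j))
    (.and (d_colLt _ _) (d_colLt _ _))))) ?_
  intro n v
  beta_reduce
  generalize v i = x
  generalize v j = y
  constructor
  · rintro ⟨h0, h1⟩
    by_contra hne
    obtain ⟨w, hw1, hw2⟩ := exists_pt (c := col x + 1) (r := 0) y (by omega) (by omega)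
    exact h1 ⟨w, by omega, by omega⟩
  · intro h
    refine ⟨by omega, ?_⟩
    rintro ⟨w, h1, h2⟩
    omega

theorem d_diag : Dfn1 (fun x => rowf x = col x) := fun {α} i => by
  refine Dfn.congr (Dfn.all (P := fun n v (w : Fin (n + 1)) => col w < col (v i) →
    ¬ rowf w = rowf (v i))
    (.imp (d_colLt _ _) (.not (d_rowEq _ _)))) ?_
  intro n v
  beta_reduce
  generalize v i = x
  have := rowf_le_col x
  constructor
  · intro h
    by_contra hne
    obtain ⟨w, hw1, hw2⟩ := exists_pt (c := col x - 1) (r := rowf x) x (by omega) (by omega)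
    exact h w (by omega) hw2
  · intro h w hw
    have := rowf_le_col w
    omega

theorem d_colRow : Dfn2 (fun x y => col x = rowf y) := fun {α} i j => by
  refine Dfn.congr (Dfn.ex (P := fun n v (w : Fin (n + 1)) => rowf w = col w ∧
    col w = col (v i) ∧ rowf w = rowf (v j))
    (.and (d_diag _) (.and (d_colEq _ _) (d_rowEq _ _)))) ?_
  intro n v
  beta_reduce
  generalize v i = x
  generalize v j = y
  have := rowf_le_col y
  constructor
  · rintro ⟨w, h⟩
    omega
  · intro h
    obtain ⟨w, hw1, hw2⟩ := exists_pt (c := rowf y) (r := rowf y) y (by omega) (by omega)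
    exact ⟨w, by omega, by omega, by omega⟩

theorem d_colRowSucc : Dfn2 (fun x y => col x + 1 = rowf y) := fun {α} i j => by
  refine Dfn.congr (Dfn.ex (P := fun n v (w : Fin (n + 1)) => col w = rowf (v j) ∧
    col (v i) + 1 = col w)
    (.and (d_colRow _ _) (d_colSucc _ _))) ?_
  intro n v
  beta_reduce
  generalize v i = x
  generalize v j = y
  have := rowf_le_col y
  constructor
  · rintro ⟨w, h⟩
    omega
  · intro h
    obtain ⟨w, hw1, hw2⟩ := exists_pt (c := rowf y) (r := rowf y) y (by omega) (by omega)
    exact ⟨w, by omega, by omega⟩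

theorem qseq_lt_two_pow (c : ℕ) : qseq c < 2 ^ c := by
  induction c with
  | zero => simp [qseq_zero]
  | succ k ih =>
    rw [qseq_succ, pow_succ]
    have : k + 1 ≤ 2 ^ k := Nat.lt_two_pow_self
    omega

theorem d_bitq : Dfn2 (fun a z => Nat.testBit (qseq (col a)) (rowf z) = true) :=
  fun {α} i j => by
  refine Dfn.congr (Dfn.ex (P := fun n v (y : Fin (n + 1)) => col y + 1 = col (v i) ∧
    rowf y = rowf (v j) ∧ Qpred y)
    (.and (d_colSucc _ _) (.and (d_rowEq _ _) (d_Q _)))) ?_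
  intro n v
  beta_reduce
  generalize v i = a
  generalize v j = z
  constructor
  · rintro ⟨y, h1, h2, h3⟩
    unfold Qpred at h3
    rwa [h1, h2] at h3
  · intro h
    have hlt : rowf z < col a := by
      by_contra hge
      rw [Nat.testBit_lt_two_pow] at h
      · exact absurd h (by simp)
      · exact (qseq_lt_two_pow _).trans_le (Nat.pow_le_pow_right (by norm_num) (by omega))
    obtain ⟨y, hy1, hy2⟩ := exists_pt (c := col a - 1) (r := rowf z) a (by omega) (by omega)
    have e : col y + 1 = col a := by omega
    refine ⟨y, e, hy2, ?_⟩
    unfold Qpred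
    rwa [e, hy2]

theorem d_bitr : Dfn2 (fun a z => Nat.testBit (rowf a) (rowf z) = true) :=
  fun {α} i j => by
  refine Dfn.congr (Dfn.ex (P := fun n v (y : Fin (n + 1)) => col y + 1 = rowf (v i) ∧
    rowf y = rowf (v j) ∧ Cpred y)
    (.and (d_colRowSucc _ _) (.and (d_rowEq _ _) (d_C _)))) ?_
  intro n v
  beta_reduce
  generalize v i = a
  generalize v j = z
  constructor
  · rintro ⟨y, h1, h2, h3⟩
    unfold Cpred at h3
    rwa [h1, h2] at h3
  · intro h
    have hlt : rowf z < rowf a := by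
      by_contra hge
      rw [Nat.testBit_lt_two_pow] at h
      · exact absurd h (by simp)
      · exact (Nat.lt_two_pow_self).trans_le (Nat.pow_le_pow_right (by norm_num) (by omega))
    have := rowf_le_col a
    obtain ⟨y, hy1, hy2⟩ := exists_pt (c := rowf a - 1) (r := rowf z) a (by omega) (by omega)
    have e : col y + 1 = rowf a := by omega
    refine ⟨y, e, hy2, ?_⟩
    unfold Cpred
    rwa [e, hy2]

/-! ### Carry lookahead -/

/-- There is a carry into position `k`. -/
def carryAt (x y k : ℕ) : Prop :=
  ∃ j < k, (x.testBit j = true ∧ y.testBit j = true) ∧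
    ∀ i < k, j < i → (x.testBit i = true ∨ y.testBit i = true)

theorem carryAt_succ (x y k : ℕ) : carryAt x y (k + 1) ↔
    (x.testBit k = true ∧ y.testBit k = true) ∨
      ((x.testBit k = true ∨ y.testBit k = true) ∧ carryAt x y k) := by
  constructor
  · rintro ⟨j, hj, h1, h2⟩
    rcases Nat.lt_succ_iff_lt_or_eq.1 hj with h | rfl
    · exact Or.inr ⟨h2 k (by omega) h, j, h, h1, fun i hi => h2 i (by omega)⟩
    · exact Or.inl h1
  · rintro (h | ⟨h, j, hj, h1, h2⟩)
    · exact ⟨k, by omega, h, fun i hi hi' => by omega⟩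
    · refine ⟨j, by omega, h1, fun i hi hi' => ?_⟩
      rcases Nat.lt_succ_iff_lt_or_eq.1 hi with h' | rfl
      · exact h2 i h' hi'
      · exact h

theorem mod_two_pow_succ_aux (x k : ℕ) :
    x % 2 ^ (k + 1) = 2 ^ k * (x.testBit k).toNat + x % 2 ^ k := by
  rw [pow_succ, Nat.mod_mul, Nat.toNat_testBit, add_comm]

theorem carryAt_iff (x y k : ℕ) : carryAt x y k ↔ 2 ^ k ≤ x % 2 ^ k + y % 2 ^ k := by
  induction k with
  | zero => simp [carryAt, Nat.mod_one]
  | succ k ih =>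
    rw [carryAt_succ, ih, mod_two_pow_succ_aux, mod_two_pow_succ_aux, pow_succ]
    have hx : x % 2 ^ k < 2 ^ k := Nat.mod_lt _ (by positivity)
    have hy : y % 2 ^ k < 2 ^ k := Nat.mod_lt _ (by positivity)
    cases x.testBit k <;> cases y.testBit k <;> simp <;> omega

theorem testBit_add_carry (x y k : ℕ) : (x + y).testBit k = true ↔
    (((x.testBit k = true ∧ ¬ y.testBit k = true) ∨ (¬ x.testBit k = true ∧ y.testBit k = true))
      ∧ ¬ carryAt x y k) ∨
    (¬ ((x.testBit k = true ∧ ¬ y.testBit k = true) ∨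
      (¬ x.testBit k = true ∧ y.testBit k = true)) ∧ carryAt x y k) := by
  rw [carryAt_iff]
  have hx : x % 2 ^ k < 2 ^ k := Nat.mod_lt _ (by positivity)
  have hy : y % 2 ^ k < 2 ^ k := Nat.mod_lt _ (by positivity)
  have hs : (x + y) % 2 ^ k < 2 ^ k := Nat.mod_lt _ (by positivity)
  have ex := mod_two_pow_succ_aux (x) k
  have ey := mod_two_pow_succ_aux (y) k
  have es := mod_two_pow_succ_aux (x + y) k
  have hs' := Nat.add_mod_eq_ite (m := x) (n := y) (k := 2 ^ (k + 1))
  rw [es, ex, ey, pow_succ] at hs'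
  revert hs'
  cases x.testBit k <;> cases y.testBit k <;> cases (x + y).testBit k <;> simp <;>
    split_ifs <;> omega

theorem d_carry : Dfn2 (fun a b => carryAt (qseq (col a)) (rowf a) (rowf b)) :=
  fun {α} s t => by
  refine Dfn.congr (Dfn.ex (P := fun n v (j : Fin (n + 1)) =>
    (col j = col (v t) ∧ (j : ℕ) < (v t : ℕ)) ∧
    ((qseq (col (v s))).testBit (rowf j) = true ∧ (rowf (v s)).testBit (rowf j) = true) ∧
    ∀ i : Fin (n + 1), (col i = col (v t) ∧ (i : ℕ) < (v t : ℕ)) → (j : ℕ) < (i : ℕ) →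
      ((qseq (col (v s))).testBit (rowf i) = true ∨ (rowf (v s)).testBit (rowf i) = true))
    (.and (.and (d_colEq _ _) (d_lt _ _)) (.and (.and (d_bitq _ _) (d_bitr _ _))
      (.all (.imp (.and (d_colEq _ _) (d_lt _ _)) (.imp (d_lt _ _)
        (.or (d_bitq _ _) (d_bitr _ _)))))))) ?_
  intro n v
  beta_reduce
  generalize v s = a
  generalize v t = b
  have := rowf_le_col b
  constructor
  · rintro ⟨j, ⟨h1, h2⟩, h3, h4⟩
    rw [lt_coord] at h2
    refine ⟨rowf j, by omega, h3, fun i hi hi' => ?_⟩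
    obtain ⟨w, hw1, hw2⟩ := exists_pt (c := col b) (r := i) b (by omega) (by omega)
    have := h4 w ⟨hw1, (lt_coord _ _).2 (by omega)⟩ ((lt_coord _ _).2 (by omega))
    rwa [hw2] at this
  · rintro ⟨j, hj, h1, h2⟩
    obtain ⟨w, hw1, hw2⟩ := exists_pt (c := col b) (r := j) b (by omega) (by omega)
    refine ⟨w, ⟨hw1, (lt_coord _ _).2 (by omega)⟩, by rwa [hw2], fun i hi hi' => ?_⟩
    rw [lt_coord] at hi hi'
    exact h2 _ (by omega) (by omega)

theorem d_bit : Dfn2 (fun a b => Nat.testBit a (rowf b) = true) := fun {α} i j => by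
  have dx := Dfn.or (.and (d_bitq i j) (.not (d_bitr i j))) (.and (.not (d_bitq i j)) (d_bitr i j))
  refine Dfn.congr (.or (.and dx (.not (d_carry i j))) (.and (.not dx) (d_carry i j))) ?_
  intro n v
  beta_reduce
  rw [← testBit_add_carry, ← eq_coord]

/-- Lemma 3.5: there is an FO(<,◁,C,Q)-formula `φBitR(x,z)`
expressing that bit `r(z)` of the binary representation of `x` is 1. -/
theorem lt_ordc_C_Q_define_bitR :
    ∃ φBitR : L4.Formula (Fin 2),
      ∀ n : ℕ,
        letI := struct4 n
        ∀ a b : Fin (n + 1),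
          φBitR.Realize ![a, b] ↔ Nat.testBit (a : ℕ) (rowf (b : ℕ)) = true := by
  obtain ⟨φ, h⟩ := d_bit (0 : Fin 2) 1
  exact ⟨φ, fun n a b => h n ![a, b]⟩
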